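/- Let F be a Ferrers diagram of semiperimeter n+1, T ∈ EWtab(F), and CanonTop(φ_TC(T)) = (U^0, V^1, U^1, …). Then: (a) for every i ∈ rows(F) \ {0} with i ∈ U^ℓ, the number of 0 entries in row i of T equals |{j ∈ cols(F) : j > i and j ∈ V^1 ∪ ⋯ ∪ V^ℓ}|; and (b) for every i ∈ cols(F) with i ∈ V^ℓ, the number of 1 entries in column i of T equals |{j ∈ rows(F) : j < i and j ∈ U^0 ∪ ⋯ ∪ U^{ℓ−1}}|. -/

import Mathlib

open Classical

/-- A Ferrers diagram of semiperimeter `n + 1`, encoded by the set of its row labels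
(labels `0, …, n` run along the south-east border; `0` labels the top row and the
last label `n` is a column label). -/
structure Ferrers (n : ℕ) where
  rows : Finset (Fin (n + 1))
  zero_mem : 0 ∈ rows
  last_not_mem : Fin.last n ∉ rows

namespace Ferrers

/-- `(i, j)` is a cell of the diagram: `i` is a row label, `j` a column label, `i < j`. -/
def Cell {n : ℕ} (F : Ferrers n) (i j : Fin (n + 1)) : Prop :=
  i ∈ F.rows ∧ j ∉ F.rows ∧ i < j

/-- Adjacency in the Ferrers graph `G(F)`. -/
def Adj {n : ℕ} (F : Ferrers n) (u v : Fin (n + 1)) : Prop :=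
  F.Cell u v ∨ F.Cell v u

/-- Degree of a vertex in `G(F)`. -/
noncomputable def deg {n : ℕ} (F : Ferrers n) (v : Fin (n + 1)) : ℕ :=
  {u | F.Adj v u}.ncard

/-- Toppling a single vertex.  The height at the sink `0` is kept equal to `c 0`
(grains sent to the sink vanish); toppling the sink sends one grain to each of
its neighbours. -/
noncomputable def topple {n : ℕ} (F : Ferrers n) (c : Fin (n + 1) → ℕ)
    (v : Fin (n + 1)) : Fin (n + 1) → ℕ :=
  fun u =>
    if u = 0 then c 0
    else if u = v then c v - F.deg v
    else if F.Adj v u then c u + 1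
    else c u

/-- Toppling the vertices of a list in order. -/
noncomputable def toppleList {n : ℕ} (F : Ferrers n) (c : Fin (n + 1) → ℕ)
    (l : List (Fin (n + 1))) : Fin (n + 1) → ℕ :=
  l.foldl F.topple c

/-- Simultaneous toppling of a set of vertices. -/
noncomputable def toppleSet {n : ℕ} (F : Ferrers n) (c : Fin (n + 1) → ℕ)
    (S : Set (Fin (n + 1))) : Fin (n + 1) → ℕ :=
  fun u =>
    if u = 0 then c 0
    else c u + {w ∈ S | F.Adj w u}.ncard - if u ∈ S then F.deg u else 0

/-- A configuration is stable if every non-sink vertex has fewer grains than its degree. -/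
def Stable {n : ℕ} (F : Ferrers n) (c : Fin (n + 1) → ℕ) : Prop :=
  ∀ v, v ≠ 0 → c v < F.deg v

/-- A Dhar (burning) ordering for `c`: an ordering `v₀ = 0, v₁, …, vₙ` of all the
vertices such that each `vᵢ` (`i ≥ 1`) is unstable after toppling `v₀, …, v_{i-1}`. -/
def DharSeq {n : ℕ} (F : Ferrers n) (c : Fin (n + 1) → ℕ) (l : List (Fin (n + 1))) : Prop :=
  l.length = n + 1 ∧ l.Nodup ∧ l.head? = some 0 ∧
    ∀ i, ∀ h : i < l.length, 1 ≤ i →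
      F.deg (l.get ⟨i, h⟩) ≤ F.toppleList c (l.take i) (l.get ⟨i, h⟩)

/-- Recurrent configurations (via Dhar's criterion).  The height at the sink is
normalised to `0`. -/
def Recurrent {n : ℕ} (F : Ferrers n) (c : Fin (n + 1) → ℕ) : Prop :=
  c 0 = 0 ∧ F.Stable c ∧ ∃ l, F.DharSeq c l

/-- Minimal recurrent configurations: recurrent with minimal total number of grains. -/
def RecMin {n : ℕ} (F : Ferrers n) (c : Fin (n + 1) → ℕ) : Prop :=
  F.Recurrent c ∧ ∀ c', F.Recurrent c' → (∑ v, c v) ≤ ∑ v, c' v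

/-- Canonical toppling: block `0` is `{0}` (the sink); from then on, blocks with odd
index are the sets of currently unstable column vertices and blocks with even index
the sets of currently unstable row vertices.  The first component is the configuration
just before toppling the block recorded in the second component. -/
noncomputable def canonAux {n : ℕ} (F : Ferrers n) (c : Fin (n + 1) → ℕ) :
    ℕ → ((Fin (n + 1) → ℕ) × Set (Fin (n + 1)))
  | 0 => (c, {0})
  | k + 1 =>
    let c' := F.toppleSet (canonAux F c k).1 (canonAux F c k).2
    (c', {v | v ≠ 0 ∧ (if k % 2 = 0 then v ∉ F.rows else v ∈ F.rows) ∧ F.deg v ≤ c' v})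

/-- The `k`-th block of the canonical toppling of `c`:
`canonTop F c 0 = U⁰ = {0}`, `canonTop F c (2i-1) = Vⁱ`, `canonTop F c (2i) = Uⁱ`. -/
noncomputable def canonTop {n : ℕ} (F : Ferrers n) (c : Fin (n + 1) → ℕ) (k : ℕ) :
    Set (Fin (n + 1)) :=
  (F.canonAux c k).2

/-- The configuration just before toppling the `k`-th block of the canonical toppling. -/
noncomputable def canonConfig {n : ℕ} (F : Ferrers n) (c : Fin (n + 1) → ℕ) (k : ℕ) :
    Fin (n + 1) → ℕ :=
  (F.canonAux c k).1

/-- The index of the block of the canonical toppling of `c` containing `v`. -/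
noncomputable def bIdx {n : ℕ} (F : Ferrers n) (c : Fin (n + 1) → ℕ) (v : Fin (n + 1)) : ℕ :=
  sInf {k | v ∈ F.canonTop c k}

/-- `T` is a EW-tableau on `F` (entries of non-cells are normalised to `false`):
the top row contains only `1`s, every other row contains a `0`, and there is no
rectangle with two diagonally opposite `0`s and two `1`s in the other corners. -/
def IsEW {n : ℕ} (F : Ferrers n) (T : Fin (n + 1) → Fin (n + 1) → Bool) : Prop :=
  (∀ i j, ¬F.Cell i j → T i j = false) ∧
  (∀ j, F.Cell 0 j → T 0 j = true) ∧
  (∀ i, i ∈ F.rows → i ≠ 0 → ∃ j, F.Cell i j ∧ T i j = false) ∧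
  (∀ i i' j j', F.Cell i j → F.Cell i j' → F.Cell i' j → F.Cell i' j' →
    T i j = T i' j' → T i j' = T i' j → T i j = T i j')

/-- The configuration associated to a tableau: row vertices count the `1`s in their
row, column vertices count the `0`s in their column (the sink is normalised to `0`). -/
noncomputable def phiTC {n : ℕ} (F : Ferrers n) (T : Fin (n + 1) → Fin (n + 1) → Bool) :
    Fin (n + 1) → ℕ :=
  fun v =>
    if v = 0 then 0
    else if v ∈ F.rows then {j | F.Cell v j ∧ T v j = true}.ncard
    else {i | F.Cell i v ∧ T i v = false}.ncard

/-- The tableau associated to a (minimal recurrent) configuration: a cell `(i, j)`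
gets a `1` exactly when `i` lies in an earlier block than `j` in the canonical
toppling of `c`. -/
noncomputable def phiCT {n : ℕ} (F : Ferrers n) (c : Fin (n + 1) → ℕ) :
    Fin (n + 1) → Fin (n + 1) → Bool :=
  fun i j => if F.Cell i j ∧ F.bIdx c i < F.bIdx c j then true else false

/-- The supplementary tableau of `T`: `S i j = 1` exactly when the row vertex `i`
lies in an earlier block than the column vertex `j` in `CanonTop (φ_TC T)`. -/
noncomputable def suppS {n : ℕ} (F : Ferrers n) (T : Fin (n + 1) → Fin (n + 1) → Bool)
    (i j : Fin (n + 1)) : Bool :=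
  if F.bIdx (F.phiTC T) i < F.bIdx (F.phiTC T) j then true else false

/-- The entry of `T` in cell `(j, k)` is a cornersupport entry. -/
def Cornersupport {n : ℕ} (F : Ferrers n) (T : Fin (n + 1) → Fin (n + 1) → Bool)
    (j k : Fin (n + 1)) : Prop :=
  ∃ j' k', j' ∈ F.rows ∧ k' ∉ F.rows ∧ j' ≠ j ∧ k' ≠ k ∧
    F.suppS T j' k' = !(T j k) ∧ F.suppS T j' k = T j k ∧ F.suppS T j k' = T j k

/-- `ν_v(T)`: the number of non-cornersupport `0`s in row `v` (if `v` is a row label),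
resp. non-cornersupport `1`s in column `v` (if `v` is a column label). -/
noncomputable def nu {n : ℕ} (F : Ferrers n) (T : Fin (n + 1) → Fin (n + 1) → Bool)
    (v : Fin (n + 1)) : ℕ :=
  if v ∈ F.rows then {k | F.Cell v k ∧ T v k = false ∧ ¬F.Cornersupport T v k}.ncard
  else {i | F.Cell i v ∧ T i v = true ∧ ¬F.Cornersupport T i v}.ncard

/-- `μ_v(c)`: if `v ∈ Uⁱ`, the number of `k ∈ Vⁱ` with `k > v`; if `v ∈ Vⁱ`,
the number of `k ∈ U^{i-1}` with `k < v`.  In both cases the relevant block is the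
one immediately preceding the block of `v`. -/
noncomputable def mu {n : ℕ} (F : Ferrers n) (c : Fin (n + 1) → ℕ) (v : Fin (n + 1)) : ℕ :=
  if v ∈ F.rows then {k | v < k ∧ k ∈ F.canonTop c (F.bIdx c v - 1)}.ncard
  else {k | k < v ∧ k ∈ F.canonTop c (F.bIdx c v - 1)}.ncard

/-- The minimal recurrent configuration with the same canonical toppling as `c`:
if `j ∈ Uⁱ` then `minrec c j = |{ℓ ∈ Vᵏ : j < ℓ, k > i}|`, and if `j ∈ Vⁱ` then
`minrec c j = |{ℓ ∈ Uᵏ : ℓ < j, k ≥ i}|` (blocks `Vᵏ` sit at odd index `2k - 1`,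
blocks `Uᵏ` at even index `2k`). -/
noncomputable def minrecFun {n : ℕ} (F : Ferrers n) (c : Fin (n + 1) → ℕ) :
    Fin (n + 1) → ℕ :=
  fun j =>
    if j = 0 then 0
    else if j ∈ F.rows then
      {l | j < l ∧ ∃ k, F.bIdx c j < 2 * k + 1 ∧ l ∈ F.canonTop c (2 * k + 1)}.ncard
    else
      {l | l < j ∧ ∃ k, F.bIdx c j < 2 * k ∧ l ∈ F.canonTop c (2 * k)}.ncard

/-- The number of edges of `G(F)` (equivalently, the number of cells of `F`). -/
noncomputable def edgeCount {n : ℕ} (F : Ferrers n) : ℕ :=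
  {p : Fin (n + 1) × Fin (n + 1) | F.Cell p.1 p.2}.ncard

end Ferrers

namespace Ferrers

variable {n : ℕ} {F : Ferrers n} {T : Fin (n + 1) → Fin (n + 1) → Bool}

/-- `w` is an in-neighbour of `v` for the orientation of `G(F)` in which an entry `1` directs
the edge from its row to its column, and an entry `0` from its column to its row. -/
def InNbr (F : Ferrers n) (T : Fin (n + 1) → Fin (n + 1) → Bool) (v w : Fin (n + 1)) : Prop :=
  (F.Cell v w ∧ T v w = false) ∨ (F.Cell w v ∧ T w v = true)

/-- The vertices toppled strictly before the `k`-th block of the canonical toppling of `c`. -/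
def toppledBefore (F : Ferrers n) (c : Fin (n + 1) → ℕ) (k : ℕ) : Set (Fin (n + 1)) :=
  {v | ∃ m, m < k ∧ v ∈ F.canonTop c m}

lemma Adj.symm {u v : Fin (n + 1)} (h : F.Adj u v) : F.Adj v u :=
  Or.symm h

lemma InNbr.adj {v w : Fin (n + 1)} (h : F.InNbr T v w) : F.Adj w v := by
  rcases h with h | h
  · exact Or.inr h.1
  · exact Or.inl h.1

lemma inNbr_or_inNbr_of_adj {v w : Fin (n + 1)} (h : F.Adj w v) :
    F.InNbr T v w ∨ F.InNbr T w v := by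
  rcases h with h | h
  · cases hb : T w v
    · exact Or.inr (Or.inl ⟨h, hb⟩)
    · exact Or.inl (Or.inr ⟨h, hb⟩)
  · cases hb : T v w
    · exact Or.inl (Or.inl ⟨h, hb⟩)
    · exact Or.inr (Or.inr ⟨h, hb⟩)

lemma inNbr_iff_of_mem_rows {v w : Fin (n + 1)} (hv : v ∈ F.rows) :
    F.InNbr T v w ↔ F.Cell v w ∧ T v w = false :=
  or_iff_left fun h => h.1.2.1 hv

lemma inNbr_iff_of_notMem_rows {v w : Fin (n + 1)} (hv : v ∉ F.rows) :
    F.InNbr T v w ↔ F.Cell w v ∧ T w v = true :=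
  or_iff_right fun h => hv h.1.1

lemma IsEW.not_inNbr_zero (hT : F.IsEW T) (w : Fin (n + 1)) : ¬F.InNbr T 0 w := by
  rw [inNbr_iff_of_mem_rows F.zero_mem]
  rintro ⟨h, hf⟩
  simp [hT.2.1 w h] at hf

lemma IsEW.exists_inNbr (hT : F.IsEW T) {v : Fin (n + 1)} (hv : v ≠ 0) :
    ∃ w, F.InNbr T v w := by
  by_cases hr : v ∈ F.rows
  · obtain ⟨j, hj⟩ := hT.2.2.1 v hr hv
    exact ⟨j, Or.inl hj⟩
  · have hc : F.Cell 0 v := ⟨F.zero_mem, hr, Fin.pos_of_ne_zero hv⟩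
    exact ⟨0, Or.inr ⟨hc, hT.2.1 v hc⟩⟩

/-- The configuration of a tableau records out-degrees, so it complements the in-degrees. -/
lemma phiTC_add_ncard_inNbr {v : Fin (n + 1)} (hv : v ≠ 0) :
    F.phiTC T v + {w | F.InNbr T v w}.ncard = F.deg v := by
  unfold phiTC deg
  rw [if_neg hv]
  by_cases hr : v ∈ F.rows
  · rw [if_pos hr, ← Set.ncard_union_eq ?_ (Set.toFinite _) (Set.toFinite _)]
    · congr 1
      ext w
      have : ¬F.Cell w v := fun h => h.2.1 hr
      cases hb : T v w <;> simp [inNbr_iff_of_mem_rows hr, Adj, this, hb]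
    · rw [Set.disjoint_left]
      rintro w ⟨_, h⟩ h'
      simp [inNbr_iff_of_mem_rows hr, h] at h'
  · rw [if_neg hr, ← Set.ncard_union_eq ?_ (Set.toFinite _) (Set.toFinite _)]
    · congr 1
      ext w
      have : ¬F.Cell v w := fun h => hr h.1
      cases hb : T w v <;> simp [inNbr_iff_of_notMem_rows hr, Adj, this, hb]
    · rw [Set.disjoint_left]
      rintro w ⟨_, h⟩ h'
      simp [inNbr_iff_of_notMem_rows hr, h] at h'

lemma IsEW.stable_phiTC (hT : F.IsEW T) : F.Stable (F.phiTC T) := by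
  intro v hv
  have h := phiTC_add_ncard_inNbr (F := F) (T := T) hv
  have hpos : 0 < {w | F.InNbr T v w}.ncard :=
    (Set.ncard_pos (Set.toFinite _)).2 (hT.exists_inNbr hv)
  omega

lemma ncard_toppled_adj_le_deg (S : Set (Fin (n + 1))) (v : Fin (n + 1)) :
    {w ∈ S | F.Adj w v}.ncard ≤ F.deg v :=
  Set.ncard_le_ncard (fun _ hw => Adj.symm hw.2) (Set.toFinite _)

lemma toppledBefore_succ (c : Fin (n + 1) → ℕ) (k : ℕ) :
    F.toppledBefore c (k + 1) = F.toppledBefore c k ∪ F.canonTop c k := by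
  ext v
  simp only [toppledBefore, Set.mem_ofPred_eq, Set.mem_union, Nat.lt_succ_iff_lt_or_eq, or_and_right,
    exists_or, exists_eq_left]

lemma toppledBefore_mono (c : Fin (n + 1) → ℕ) {k m : ℕ} (h : k ≤ m) :
    F.toppledBefore c k ⊆ F.toppledBefore c m :=
  fun _ ⟨a, ha, hv⟩ => ⟨a, ha.trans_le h, hv⟩

lemma deg_le_canonConfig {c : Fin (n + 1) → ℕ} {k : ℕ} {v : Fin (n + 1)} (hv : v ≠ 0)
    (h : v ∈ F.canonTop c k) : F.deg v ≤ F.canonConfig c k v := by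
  cases k with
  | zero => exact absurd h hv
  | succ k => exact h.2.2

lemma canonConfig_succ (c : Fin (n + 1) → ℕ) (k : ℕ) :
    F.canonConfig c (k + 1) = F.toppleSet (F.canonConfig c k) (F.canonTop c k) :=
  rfl

lemma mem_rows_iff_even_of_mem_canonTop {c : Fin (n + 1) → ℕ} {k : ℕ} {v : Fin (n + 1)}
    (h : v ∈ F.canonTop c k) : v ∈ F.rows ↔ Even k := by
  cases k with
  | zero =>
    obtain rfl : v = 0 := h
    simp [F.zero_mem]
  | succ k =>
    have h' := h.2.1
    rw [Nat.even_add_one, Nat.even_iff]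
    split_ifs at h' with hk <;> simp [h', hk]

lemma zero_notMem_canonTop_succ (c : Fin (n + 1) → ℕ) (k : ℕ) : 0 ∉ F.canonTop c (k + 1) :=
  fun h => h.1 rfl

/-- Before block `k`, every vertex has toppled at most once, it has toppled exactly after its
in-neighbours among its neighbours, and the configuration is accounted for by these topplings. -/
lemma IsEW.canonTop_invariant (hT : F.IsEW T) (k : ℕ) :
    (∀ m < k, ∀ v ∈ F.canonTop (F.phiTC T) m, v ∉ F.toppledBefore (F.phiTC T) m ∧
      {w ∈ F.toppledBefore (F.phiTC T) m | F.Adj w v} = {w | F.InNbr T v w}) ∧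
    ∀ u, u ≠ 0 → F.canonConfig (F.phiTC T) k u +
      (if u ∈ F.toppledBefore (F.phiTC T) k then F.deg u else 0) =
        F.phiTC T u + {w ∈ F.toppledBefore (F.phiTC T) k | F.Adj w u}.ncard := by
  set c := F.phiTC T
  induction k with
  | zero => simp [toppledBefore, canonConfig, canonAux]
  | succ k ih =>
    obtain ⟨ihTop, ihConfig⟩ := ih
    have hfresh : ∀ v ∈ F.canonTop c k, v ∉ F.toppledBefore c k := by
      intro v hv hmem
      by_cases h0 : v = 0
      · subst h0
        cases k with
        | zero => simp [toppledBefore] at hmem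
        | succ k => exact zero_notMem_canonTop_succ c k hv
      · have hcfg := ihConfig v h0
        rw [if_pos hmem] at hcfg
        have hdeg := deg_le_canonConfig h0 hv
        have hle := ncard_toppled_adj_le_deg (F := F) (F.toppledBefore c k) v
        have hst : c v < F.deg v := hT.stable_phiTC v h0
        omega
    have hnbr : ∀ v ∈ F.canonTop c k,
        {w ∈ F.toppledBefore c k | F.Adj w v} = {w | F.InNbr T v w} := by
      intro v hv
      have hsub : {w ∈ F.toppledBefore c k | F.Adj w v} ⊆ {w | F.InNbr T v w} := by
        rintro w ⟨⟨m, hm, hw⟩, hadj⟩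
        refine (inNbr_or_inNbr_of_adj hadj).resolve_right fun hin => hfresh v hv ?_
        have hv' : v ∈ {x ∈ F.toppledBefore c m | F.Adj x w} := by
          rw [(ihTop m hm w hw).2]
          exact hin
        exact toppledBefore_mono c hm.le hv'.1
      by_cases h0 : v = 0
      · subst h0
        exact hsub.antisymm fun w hw => absurd hw (hT.not_inNbr_zero w)
      · refine Set.eq_of_subset_of_ncard_le hsub ?_ (Set.toFinite _)
        have hcfg := ihConfig v h0
        rw [if_neg (hfresh v hv)] at hcfg
        have hdeg := deg_le_canonConfig h0 hv
        have hin : c v + _ = _ := phiTC_add_ncard_inNbr (F := F) (T := T) h0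
        omega
    refine ⟨fun m hm v hv => ?_, fun u h0 => ?_⟩
    · rcases Nat.lt_succ_iff_lt_or_eq.1 hm with hm | rfl
      · exact ihTop m hm v hv
      · exact ⟨hfresh v hv, hnbr v hv⟩
    · have hcard : {w ∈ F.toppledBefore c (k + 1) | F.Adj w u}.ncard =
          {w ∈ F.toppledBefore c k | F.Adj w u}.ncard +
            {w ∈ F.canonTop c k | F.Adj w u}.ncard := by
        rw [← Set.ncard_union_eq ?_ (Set.toFinite _) (Set.toFinite _), toppledBefore_succ]
        · congr 1
          ext w
          simp [or_and_right]
        · rw [Set.disjoint_left]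
          exact fun w hw hw' => hfresh w hw'.1 hw.1
      have hcfg := ihConfig u h0
      rw [hcard, canonConfig_succ, toppleSet, if_neg h0, toppledBefore_succ]
      by_cases hu : u ∈ F.canonTop c k
      · have hdeg := deg_le_canonConfig h0 hu
        simp only [hfresh u hu, hu, Set.mem_union, or_true, if_true, if_false] at hcfg ⊢
        omega
      · simp only [hu, Set.mem_union, or_false, if_false] at hcfg ⊢
        omega

/-- When a vertex topples, its neighbours that have already toppled are its in-neighbours. -/
lemma IsEW.toppledBefore_adj_iff (hT : F.IsEW T) {k : ℕ} {v : Fin (n + 1)}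
    (hv : v ∈ F.canonTop (F.phiTC T) k) (w : Fin (n + 1)) :
    (w ∈ F.toppledBefore (F.phiTC T) k ∧ F.Adj w v) ↔ F.InNbr T v w :=
  Set.ext_iff.1 ((hT.canonTop_invariant (k + 1)).1 k k.lt_succ_self v hv).2 w

end Ferrers

/-- **Lemma, configuration-free form.**  (a) If the non-sink row
vertex `i` lies in `Uˡ`, the number of `0`s in row `i` of `T` is the number of
columns `j > i` lying in `V¹ ∪ ⋯ ∪ Vˡ`.  (b) If the column vertex `i` lies in
`V^{l+1}`, the number of `1`s in column `i` of `T` is the number of rows `j < i`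
lying in `U⁰ ∪ ⋯ ∪ Uˡ`.  (Here `Uᵐ = canonTop (2m)` and `Vᵐ⁺¹ = canonTop (2m + 1)`.) -/
theorem row_zeros_col_ones_count {n : ℕ} (F : Ferrers n)
    (T : Fin (n + 1) → Fin (n + 1) → Bool) (hT : F.IsEW T) :
    (∀ i : Fin (n + 1), i ∈ F.rows → i ≠ 0 → ∀ l : ℕ,
      i ∈ F.canonTop (F.phiTC T) (2 * l) →
        {k | F.Cell i k ∧ T i k = false}.ncard =
          {j : Fin (n + 1) | j ∉ F.rows ∧ i < j ∧
            ∃ m, m < l ∧ j ∈ F.canonTop (F.phiTC T) (2 * m + 1)}.ncard) ∧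
    (∀ i : Fin (n + 1), i ∉ F.rows → ∀ l : ℕ,
      i ∈ F.canonTop (F.phiTC T) (2 * l + 1) →
        {k | F.Cell k i ∧ T k i = true}.ncard =
          {j : Fin (n + 1) | j ∈ F.rows ∧ j < i ∧
            ∃ m, m ≤ l ∧ j ∈ F.canonTop (F.phiTC T) (2 * m)}.ncard) := by
  refine ⟨fun i hi _ l hl => ?_, fun i hi l hl => ?_⟩
  · congr 1
    ext j
    rw [Set.mem_ofPred_eq, ← Ferrers.inNbr_iff_of_mem_rows hi, ← hT.toppledBefore_adj_iff hl]
    constructor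
    · rintro ⟨⟨m, hm, hj⟩, hadj⟩
      have hcell : F.Cell i j := hadj.resolve_left fun h => h.2.1 hi
      have hodd : ¬Even m := fun h =>
        hcell.2.1 ((Ferrers.mem_rows_iff_even_of_mem_canonTop hj).2 h)
      obtain ⟨a, rfl⟩ := Nat.not_even_iff_odd.1 hodd
      exact ⟨hcell.2.1, hcell.2.2, a, by omega, hj⟩
    · rintro ⟨hj, hij, m, hm, hmem⟩
      exact ⟨⟨2 * m + 1, by omega, hmem⟩, Or.inr ⟨hi, hj, hij⟩⟩
  · congr 1
    ext j
    rw [Set.mem_ofPred_eq, ← Ferrers.inNbr_iff_of_notMem_rows hi, ← hT.toppledBefore_adj_iff hl]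
    constructor
    · rintro ⟨⟨m, hm, hj⟩, hadj⟩
      have hcell : F.Cell j i := hadj.resolve_right fun h => hi h.1
      have heven := (Ferrers.mem_rows_iff_even_of_mem_canonTop hj).1 hcell.1
      obtain ⟨a, rfl⟩ := even_iff_exists_two_mul.1 heven
      exact ⟨hcell.1, hcell.2.2, a, by omega, hj⟩
    · rintro ⟨hj, hji, m, hm, hmem⟩
      exact ⟨⟨2 * m, by omega, hmem⟩, Or.inl ⟨hj, hi, hji⟩⟩
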